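/- arXiv:2311.05753 — 3 statements merged into one kernel-verified Lean document; each statement's English description precedes it below -/
import Mathlib

section
/- The maps satisfy ε ∘ d = 0, d is injective, and ε is surjective. In other words, the three-term sequence A ⊕ B → A ⊕ B → K with maps d and ε is a chain complex that is exact at its two outer positions. -/
/-!
Let `k` be a field and `R = k[x₁,y₁,x₂,y₂]/(x₁y₁, x₂y₂)` the coordinate ring of the
self-product of the nodal conic, realized as `MvPolynomial (Fin 4) k` modulo the ideal
generated by `X 0 * X 1` and `X 2 * X 3`, with `x₁ = X 0`, `y₁ = X 1`, `x₂ = X 2`,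
`y₂ = X 3`.  We define the `R`-modules `A = R/(y₁,y₂)`, `B = R/(x₁,x₂)`,
`K = R/(x₁,y₁,x₂,y₂)`, the map `d : A ⊕ B → A ⊕ B`, `(a,b) ↦ ((x₁−x₂)a, (y₁−y₂)b)`,
and the map `ε : A ⊕ B → K` given by the canonical quotient maps on each factor.
-/

open MvPolynomial

set_option synthInstance.maxHeartbeats 1000000
set_option maxHeartbeats 1000000

noncomputable section

/-- The coordinate ring `R = k[x₁,y₁,x₂,y₂]/(x₁y₁, x₂y₂)` of the self-product of the
nodal conic. -/
abbrev nodalR (k : Type) [Field k] : Type :=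
  MvPolynomial (Fin 4) k ⧸
    (Ideal.span {X 0 * X 1, X 2 * X 3} : Ideal (MvPolynomial (Fin 4) k))

variable (k : Type) [Field k]

/-- `x₁` -/ def nx₁ : nodalR k := Ideal.Quotient.mk _ (X 0)
/-- `y₁` -/ def ny₁ : nodalR k := Ideal.Quotient.mk _ (X 1)
/-- `x₂` -/ def nx₂ : nodalR k := Ideal.Quotient.mk _ (X 2)
/-- `y₂` -/ def ny₂ : nodalR k := Ideal.Quotient.mk _ (X 3)

/-- The ideal `(y₁, y₂)`. -/ def JA : Ideal (nodalR k) := Ideal.span {ny₁ k, ny₂ k}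
/-- The ideal `(x₁, x₂)`. -/ def JB : Ideal (nodalR k) := Ideal.span {nx₁ k, nx₂ k}
/-- The ideal `(x₁, y₁, x₂, y₂)`. -/
def JK : Ideal (nodalR k) := Ideal.span {nx₁ k, ny₁ k, nx₂ k, ny₂ k}

/-- `A = R/(y₁,y₂)`. -/ abbrev nodalA := nodalR k ⧸ JA k
/-- `B = R/(x₁,x₂)`. -/ abbrev nodalB := nodalR k ⧸ JB k
/-- `K = R/(x₁,y₁,x₂,y₂)`. -/ abbrev nodalK := nodalR k ⧸ JK k

lemma JA_le_JK : JA k ≤ JK k := by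
  rw [JA, Ideal.span_le]
  rintro a ha
  simp only [Set.mem_insert_iff, Set.mem_singleton_iff] at ha
  rcases ha with rfl | rfl <;> exact Ideal.subset_span (by simp [JK])

lemma JB_le_JK : JB k ≤ JK k := by
  rw [JB, Ideal.span_le]
  rintro a ha
  simp only [Set.mem_insert_iff, Set.mem_singleton_iff] at ha
  rcases ha with rfl | rfl <;> exact Ideal.subset_span (by simp [JK])

/-- The canonical quotient map `A → K`. -/
def qA : nodalA k →ₗ[nodalR k] nodalK k :=
  Submodule.mapQ (JA k) (JK k) LinearMap.id (by simpa using JA_le_JK k)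

/-- The canonical quotient map `B → K`. -/
def qB : nodalB k →ₗ[nodalR k] nodalK k :=
  Submodule.mapQ (JB k) (JK k) LinearMap.id (by simpa using JB_le_JK k)

/-- `d : A ⊕ B → A ⊕ B`, `(a, b) ↦ ((x₁ − x₂)·a, (y₁ − y₂)·b)`. -/
def nodal_d : nodalA k × nodalB k →ₗ[nodalR k] nodalA k × nodalB k :=
  (LinearMap.lsmul (nodalR k) (nodalA k) (nx₁ k - nx₂ k)).prodMap
    (LinearMap.lsmul (nodalR k) (nodalB k) (ny₁ k - ny₂ k))

/-- `ε : A ⊕ B → K`, `(a, b) ↦ ā + b̄`. -/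
def nodal_ε : nodalA k × nodalB k →ₗ[nodalR k] nodalK k :=
  LinearMap.coprod (qA k) (qB k)

/-!
An ideal of a polynomial ring over a domain generated by variables is prime, being the kernel of
the map that sets these variables to zero. The ideals `(y₁, y₂)` and `(x₁, x₂)` of `R` are images
of such ideals, each of which contains both relations `x₁y₁` and `x₂y₂`, so they are prime as well.
Hence `A` and `B` are domains, on which `x₁ - x₂` and `y₁ - y₂`, respectively, act as nonzero
elements and therefore injectively. Both elements lie in `(x₁, y₁, x₂, y₂)`, which annihilates `K`.
-/

section ScalarMaps

variable {R U V W : Type*} [CommSemiring R] [AddCommMonoid U] [AddCommMonoid V] [AddCommMonoid W]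
  [Module R U] [Module R V] [Module R W] {a b : R}

lemma coprod_comp_prodMap_lsmul_eq_zero (f : V →ₗ[R] U) (g : W →ₗ[R] U)
    (ha : a ∈ Module.annihilator R U) (hb : b ∈ Module.annihilator R U) :
    (f.coprod g).comp ((LinearMap.lsmul R V a).prodMap (LinearMap.lsmul R W b)) = 0 := by
  rw [Module.mem_annihilator] at ha hb
  ext <;> simp [ha, hb]

lemma prodMap_lsmul_injective (ha : IsSMulRegular V a) (hb : IsSMulRegular W b) :
    Function.Injective ((LinearMap.lsmul R V a).prodMap (LinearMap.lsmul R W b)) :=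
  Function.Injective.prodMap ha hb

lemma coprod_surjective_of_left {f : V →ₗ[R] U} (hf : Function.Surjective f) (g : W →ₗ[R] U) :
    Function.Surjective (f.coprod g) := by
  rw [← LinearMap.range_eq_top, LinearMap.range_coprod, LinearMap.range_eq_top.mpr hf, top_sup_eq]

end ScalarMaps

section PrimeIdeals

variable {R : Type*} [CommRing R] {I J M : Ideal R} {a b : R}

lemma isSMulRegular_quotient_of_notMem [hI : I.IsPrime] (ha : a ∉ I) : IsSMulRegular (R ⧸ I) a :=
  (isSMulRegular_quotient_iff_mem_of_smul_mem I a).mpr fun _ h =>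
    (hI.mem_or_mem h).resolve_left ha

theorem nodal_conic_three_term_complex_general [I.IsPrime] [J.IsPrime] (hI : I ≤ M) (hJ : J ≤ M)
    (ha : a ∈ M) (haI : a ∉ I) (hb : b ∈ M) (hbJ : b ∉ J) :
    ((Submodule.factor hI).coprod (Submodule.factor hJ)).comp
        ((LinearMap.lsmul R (R ⧸ I) a).prodMap (LinearMap.lsmul R (R ⧸ J) b)) = 0 ∧
      Function.Injective
        ((LinearMap.lsmul R (R ⧸ I) a).prodMap (LinearMap.lsmul R (R ⧸ J) b)) ∧
      Function.Surjective ((Submodule.factor hI).coprod (Submodule.factor hJ)) :=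
  ⟨coprod_comp_prodMap_lsmul_eq_zero _ _ (by rwa [Ideal.annihilator_quotient])
      (by rwa [Ideal.annihilator_quotient]),
    prodMap_lsmul_injective (isSMulRegular_quotient_of_notMem haI)
      (isSMulRegular_quotient_of_notMem hbJ),
    coprod_surjective_of_left (Submodule.factor_surjective hI) _⟩

end PrimeIdeals

section VariableIdeals

variable {σ τ R : Type*} {s : Set σ} {i j l m : σ} {f : τ → σ}

lemma killCompl_X_of_notMem_range [CommSemiring R] (hf : Function.Injective f)
    (hi : i ∉ Set.range f) : killCompl hf (X i : MvPolynomial σ R) = 0 := by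
  rw [killCompl, aeval_X, dif_neg hi]

lemma X_mul_X_mem_span_X_image [CommSemiring R] (h : i ∈ s ∨ j ∈ s) :
    (X i * X j : MvPolynomial σ R) ∈ Ideal.span (X '' s) :=
  h.elim (fun hi => Ideal.mul_mem_right _ _ (Ideal.subset_span (Set.mem_image_of_mem X hi)))
    fun hj => Ideal.mul_mem_left _ _ (Ideal.subset_span (Set.mem_image_of_mem X hj))

lemma span_pair_X_mul_X_le_span_X_image [CommSemiring R] (h₁ : i ∈ s ∨ j ∈ s)
    (h₂ : l ∈ s ∨ m ∈ s) :
    (Ideal.span {X i * X j, X l * X m} : Ideal (MvPolynomial σ R)) ≤ Ideal.span (X '' s) := by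
  rw [Ideal.span_le, Set.pair_subset_iff]
  exact ⟨X_mul_X_mem_span_X_image h₁, X_mul_X_mem_span_X_image h₂⟩

variable [CommRing R]

lemma mk_rename_killCompl (hf : Function.Injective f) (p : MvPolynomial σ R) :
    Ideal.Quotient.mk (Ideal.span (X '' (Set.range f)ᶜ)) (rename f (killCompl hf p)) =
      Ideal.Quotient.mk (Ideal.span (X '' (Set.range f)ᶜ)) p := by
  let π := Ideal.Quotient.mkₐ R (Ideal.span (X '' (Set.range f)ᶜ) : Ideal (MvPolynomial σ R))
  suffices (π.comp (rename f)).comp (killCompl hf) = π from DFunLike.congr_fun this p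
  ext i
  by_cases hi : i ∈ Set.range f
  · obtain ⟨t, rfl⟩ := hi
    simp [← rename_X, killCompl_rename_app]
  · have hX : π (X i) = 0 :=
      Ideal.Quotient.eq_zero_iff_mem.mpr (Ideal.subset_span (Set.mem_image_of_mem X hi))
    simp [killCompl_X_of_notMem_range hf hi, hX]

lemma ker_killCompl (hf : Function.Injective f) :
    RingHom.ker (killCompl hf : MvPolynomial σ R →ₐ[R] MvPolynomial τ R) =
      Ideal.span (X '' (Set.range f)ᶜ) := by
  apply le_antisymm
  · intro p hp
    rw [← Ideal.Quotient.eq_zero_iff_mem, ← mk_rename_killCompl hf, RingHom.mem_ker.mp hp,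
      map_zero, map_zero]
  · rw [Ideal.span_le]
    rintro _ ⟨i, hi, rfl⟩
    exact killCompl_X_of_notMem_range hf hi

lemma isPrime_span_X_image [IsDomain R] (s : Set σ) :
    (Ideal.span (X '' s) : Ideal (MvPolynomial σ R)).IsPrime := by
  have hker := ker_killCompl (R := R) (Subtype.val_injective (p := (· ∈ sᶜ)))
  rw [Subtype.range_coe, compl_compl] at hker
  exact hker ▸ RingHom.ker_isPrime _

lemma X_sub_X_notMem_span_X_image [Nontrivial R] (hi : i ∉ s) (hij : i ≠ j) :
    (X i - X j : MvPolynomial σ R) ∉ Ideal.span (X '' s) := by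
  classical
  intro h
  have hsupp : Finsupp.single i 1 ∈ (X i - X j : MvPolynomial σ R).support := by
    simp [coeff_X, hij.symm, Finsupp.single_left_inj]
  obtain ⟨v, hv, hne⟩ := mem_ideal_span_X_image.mp h _ hsupp
  obtain rfl : i = v := by simpa [Finsupp.single_apply] using hne
  exact hi hv

end VariableIdeals

lemma JA_eq_map_span_X_image :
    JA k = (Ideal.span (X '' {1, 3})).map (Ideal.Quotient.mk _) := by
  rw [Ideal.map_span, Set.image_pair, Set.image_pair]
  rfl

lemma JB_eq_map_span_X_image :
    JB k = (Ideal.span (X '' {0, 2})).map (Ideal.Quotient.mk _) := by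
  rw [Ideal.map_span, Set.image_pair, Set.image_pair]
  rfl

instance JA_isPrime : (JA k).IsPrime := by
  have := isPrime_span_X_image (R := k) ({1, 3} : Set (Fin 4))
  rw [JA_eq_map_span_X_image]
  exact Ideal.isPrime_map_quotientMk_of_isPrime
    (span_pair_X_mul_X_le_span_X_image (by simp) (by simp))

instance JB_isPrime : (JB k).IsPrime := by
  have := isPrime_span_X_image (R := k) ({0, 2} : Set (Fin 4))
  rw [JB_eq_map_span_X_image]
  exact Ideal.isPrime_map_quotientMk_of_isPrime
    (span_pair_X_mul_X_le_span_X_image (by simp) (by simp))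

lemma nx₁_sub_nx₂_notMem_JA : nx₁ k - nx₂ k ∉ JA k := by
  rw [JA_eq_map_span_X_image, nx₁, nx₂, ← map_sub,
    Ideal.mem_quotient_iff_mem (span_pair_X_mul_X_le_span_X_image (by simp) (by simp))]
  exact X_sub_X_notMem_span_X_image (by simp) (by simp)

lemma ny₁_sub_ny₂_notMem_JB : ny₁ k - ny₂ k ∉ JB k := by
  rw [JB_eq_map_span_X_image, ny₁, ny₂, ← map_sub,
    Ideal.mem_quotient_iff_mem (span_pair_X_mul_X_le_span_X_image (by simp) (by simp))]
  exact X_sub_X_notMem_span_X_image (by simp) (by simp)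

lemma nx₁_sub_nx₂_mem_JK : nx₁ k - nx₂ k ∈ JK k :=
  sub_mem (Ideal.subset_span (by simp)) (Ideal.subset_span (by simp))

lemma ny₁_sub_ny₂_mem_JK : ny₁ k - ny₂ k ∈ JK k :=
  sub_mem (Ideal.subset_span (by simp)) (Ideal.subset_span (by simp))

/-- `ε ∘ d = 0`, `d` is injective and `ε` is surjective: the three-term sequence
`A ⊕ B → A ⊕ B → K` is a chain complex which is exact at its two outer positions. -/
theorem nodal_conic_three_term_complex :
    (nodal_ε k).comp (nodal_d k) = 0 ∧
      Function.Injective (nodal_d k) ∧ Function.Surjective (nodal_ε k) :=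
  nodal_conic_three_term_complex_general (JA_le_JK k) (JB_le_JK k) (nx₁_sub_nx₂_mem_JK k)
    (nx₁_sub_nx₂_notMem_JA k) (ny₁_sub_ny₂_mem_JK k) (ny₁_sub_ny₂_notMem_JB k)

end
end

section
/- There is an isomorphism of R-modules (ker ε) ⧸ (range d) ≅ R ⧸ (x₁ − x₂, y₁ − y₂), where range d is regarded as a submodule of ker ε (which is legitimate since ε ∘ d = 0). -/
/-!
Let `k` be a field and `R = k[x₁,y₁,x₂,y₂]/(x₁y₁, x₂y₂)` the coordinate ring of the
self-product of the nodal conic, realized as `MvPolynomial (Fin 4) k` modulo the ideal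
generated by `X 0 * X 1` and `X 2 * X 3`, with `x₁ = X 0`, `y₁ = X 1`, `x₂ = X 2`,
`y₂ = X 3`.  We define the `R`-modules `A = R/(y₁,y₂)`, `B = R/(x₁,x₂)`,
`K = R/(x₁,y₁,x₂,y₂)`, the map `d : A ⊕ B → A ⊕ B`, `(a,b) ↦ ((x₁−x₂)a, (y₁−y₂)b)`,
and the map `ε : A ⊕ B → K` given by the canonical quotient maps on each factor.
-/

open MvPolynomial

set_option synthInstance.maxHeartbeats 1000000
set_option maxHeartbeats 1000000

noncomputable section

variable (k : Type) [Field k]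

/-!
The antidiagonal map `R → A ⊕ B`, `r ↦ (r̄, -r̄)`, has image `ker ε`, because
`(y₁, y₂) + (x₁, x₂)` is the ideal defining `K`. As `range d` is the product of `(x₁ - x₂) A` and
`(y₁ - y₂) B`, its preimage in `R` is the intersection of the ideals `(y₁, y₂, x₁ - x₂)` and
`(x₁, x₂, y₁ - y₂)`. Both contain the ideal of the diagonal, and on the diagonal they cut out the
ideals `(y)` and `(x)` of the two branches of the node, which meet in zero; so the intersection is
the ideal of the diagonal.
-/

section Gluing

variable {R M N : Type*} [Ring R] [AddCommGroup M] [Module R M] [AddCommGroup N] [Module R N]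

/-- A linear map `f` with range `K` identifies the quotient of `K` by the trace of a submodule `P`
with the quotient of the source of `f` by the preimage of `P`. -/
def quotientComapSubtypeEquiv (f : M →ₗ[R] N) {K : Submodule R N} (hf : LinearMap.range f = K)
    (P : Submodule R N) : (K ⧸ P.comap K.subtype) ≃ₗ[R] M ⧸ P.comap f :=
  let g : M →ₗ[R] K := f.codRestrict K fun m ↦ hf ▸ LinearMap.mem_range_self f m
  have range_g : LinearMap.range g = ⊤ := by
    rw [LinearMap.range_codRestrict, hf, Submodule.comap_subtype_self]
  have ker_mkQ_comp_g : LinearMap.ker ((P.comap K.subtype).mkQ ∘ₗ g) = P.comap f := by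
    rw [LinearMap.ker_comp, Submodule.ker_mkQ, ← Submodule.comap_comp,
      LinearMap.subtype_comp_codRestrict]
  ((Submodule.quotEquivOfEq _ _ ker_mkQ_comp_g.symm).trans
    (LinearMap.quotKerEquivOfSurjective _
      ((Submodule.mkQ_surjective _).comp (LinearMap.range_eq_top.1 range_g)))).symm

/-- The map `m ↦ (m̄, -m̄)` into the sum of two quotients of a module. -/
def antidiagonalMkQ (p q : Submodule R M) : M →ₗ[R] (M ⧸ p) × (M ⧸ q) :=
  p.mkQ.prod (-q.mkQ)

lemma comap_antidiagonalMkQ_prod {p q : Submodule R M} (P : Submodule R (M ⧸ p))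
    (Q : Submodule R (M ⧸ q)) :
    (P.prod Q).comap (antidiagonalMkQ p q) = P.comap p.mkQ ⊓ Q.comap q.mkQ := by
  ext m
  simp [antidiagonalMkQ]

lemma range_antidiagonalMkQ {p q r : Submodule R M} (hp : p ≤ r) (hq : q ≤ r) (hr : r ≤ p ⊔ q) :
    LinearMap.range (antidiagonalMkQ p q) =
      LinearMap.ker ((Submodule.factor hp).coprod (Submodule.factor hq)) := by
  apply le_antisymm
  · rintro _ ⟨m, rfl⟩
    simp [antidiagonalMkQ]
  · rintro ⟨a, b⟩ hab
    obtain ⟨a, rfl⟩ := p.mkQ_surjective a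
    obtain ⟨b, rfl⟩ := q.mkQ_surjective b
    have hab_mem : a + b ∈ r := by
      rwa [LinearMap.mem_ker, LinearMap.coprod_apply, Submodule.factor_mk, Submodule.factor_mk,
        ← map_add, Submodule.mkQ_apply, Submodule.Quotient.mk_eq_zero] at hab
    obtain ⟨u, hu, v, hv, huv⟩ := Submodule.mem_sup.1 (hr hab_mem)
    have lift_snd : -(a - u) - b = -v := by
      rw [← add_sub_cancel_left u v, huv]
      abel
    refine ⟨a - u, Prod.ext ((Submodule.Quotient.eq p).2 ?_) ((Submodule.Quotient.eq q).2 ?_)⟩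
    · simpa using hu
    · simpa only [lift_snd] using neg_mem hv

end Gluing

section Ideals

variable {R S : Type*} [CommRing R] [CommRing S]

lemma comap_mkQ_range_lsmul (I : Ideal R) (s : R) :
    (LinearMap.range (LinearMap.lsmul R (R ⧸ I) s)).comap I.mkQ = I ⊔ Ideal.span {s} := by
  have range_eq_map : LinearMap.range (LinearMap.lsmul R (R ⧸ I) s) =
      Submodule.map I.mkQ (Ideal.span {s}) := by
    ext z
    simp only [LinearMap.mem_range, Submodule.mem_map, Ideal.mem_span_singleton']
    constructor
    · rintro ⟨a, rfl⟩
      obtain ⟨a, rfl⟩ := I.mkQ_surjective a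
      exact ⟨a * s, ⟨a, rfl⟩, by rw [mul_comm]; rfl⟩
    · rintro ⟨_, ⟨a, rfl⟩, rfl⟩
      exact ⟨I.mkQ a, by rw [mul_comm]; rfl⟩
  rw [range_eq_map, Submodule.comap_map_mkQ]

lemma span_pair_sup_span_singleton_le_comap (φ : R →+* S) {u v w : R} (huv : φ u = φ v)
    (hw : φ w = 0) : Ideal.span {u, v} ⊔ Ideal.span {w} ≤ (Ideal.span {φ u}).comap φ := by
  rw [sup_le_iff, Ideal.span_le, Ideal.span_singleton_le_iff_mem]
  simp [Set.insert_subset_iff, ← huv, hw]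

lemma inf_sup_span_sub_eq_of_ker_eq (φ : R →+* S) {x₁ y₁ x₂ y₂ : R}
    (hker : RingHom.ker φ = Ideal.span {x₁ - x₂, y₁ - y₂})
    (hinf : Ideal.span {φ x₁} ⊓ Ideal.span {φ y₁} = ⊥) :
    (Ideal.span {y₁, y₂} ⊔ Ideal.span {x₁ - x₂}) ⊓ (Ideal.span {x₁, x₂} ⊔ Ideal.span {y₁ - y₂}) =
      Ideal.span {x₁ - x₂, y₁ - y₂} := by
  have hx : φ (x₁ - x₂) = 0 := by
    rw [← RingHom.mem_ker, hker]
    exact Ideal.subset_span (by simp)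
  have hy : φ (y₁ - y₂) = 0 := by
    rw [← RingHom.mem_ker, hker]
    exact Ideal.subset_span (by simp)
  apply le_antisymm
  · calc
      _ ≤ (Ideal.span {φ y₁}).comap φ ⊓ (Ideal.span {φ x₁}).comap φ :=
        inf_le_inf
          (span_pair_sup_span_singleton_le_comap φ (sub_eq_zero.1 (map_sub φ y₁ y₂ ▸ hy)) hx)
          (span_pair_sup_span_singleton_le_comap φ (sub_eq_zero.1 (map_sub φ x₁ x₂ ▸ hx)) hy)
      _ = RingHom.ker φ := by rw [← Ideal.comap_inf, inf_comm, hinf, RingHom.ker]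
      _ = _ := hker
  · have sub_mem_span_pair (u v : R) : u - v ∈ Ideal.span {u, v} :=
      sub_mem (Ideal.subset_span (by simp)) (Ideal.subset_span (by simp))
    rw [Ideal.span_le, Set.insert_subset_iff, Set.singleton_subset_iff]
    exact ⟨⟨Ideal.mem_sup_right (Ideal.mem_span_singleton_self _),
        Ideal.mem_sup_left (sub_mem_span_pair x₁ x₂)⟩,
      ⟨Ideal.mem_sup_left (sub_mem_span_pair y₁ y₂),
        Ideal.mem_sup_right (Ideal.mem_span_singleton_self _)⟩⟩

lemma span_mk_inf_span_mk_eq_bot {a b : R}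
    (h : Ideal.span {a} ⊓ Ideal.span {b} = Ideal.span {a * b}) :
    Ideal.span {Ideal.Quotient.mk (Ideal.span {a * b}) a} ⊓
      Ideal.span {Ideal.Quotient.mk (Ideal.span {a * b}) b} = ⊥ := by
  have mk_mem_span_mk {c r : R} (hc : Ideal.span {a * b} ≤ Ideal.span {c}) :
      Ideal.Quotient.mk (Ideal.span {a * b}) r ∈
        Ideal.span {Ideal.Quotient.mk (Ideal.span {a * b}) c} ↔ r ∈ Ideal.span {c} := by
    rw [← Ideal.mem_quotient_iff_mem hc, Ideal.map_span, Set.image_singleton]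
  rw [eq_bot_iff]
  rintro z ⟨hza, hzb⟩
  obtain ⟨r, rfl⟩ := Ideal.Quotient.mk_surjective z
  rw [Ideal.mem_bot, Ideal.Quotient.eq_zero_iff_mem, ← h]
  exact ⟨(mk_mem_span_mk (h ▸ inf_le_left)).1 hza, (mk_mem_span_mk (h ▸ inf_le_right)).1 hzb⟩

end Ideals

section MonomialIdeals

variable {σ A : Type*} [CommSemiring A]

lemma span_monomial_inf_span_monomial (s t : σ →₀ ℕ) :
    Ideal.span {monomial s (1 : A)} ⊓ Ideal.span {monomial t 1} =
      Ideal.span {monomial (s ⊔ t) 1} := by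
  have mem_span_monomial (u : σ →₀ ℕ) (p : MvPolynomial σ A) :
      p ∈ Ideal.span {monomial u (1 : A)} ↔ ∀ m ∈ p.support, u ≤ m := by
    simpa using mem_ideal_span_monomial_image (x := p) (s := {u})
  ext p
  simp only [Ideal.mem_inf, mem_span_monomial, sup_le_iff, forall₂_and]

lemma span_X_inf_span_X {i j : σ} (hij : i ≠ j) :
    Ideal.span {(X i : MvPolynomial σ A)} ⊓ Ideal.span {X j} = Ideal.span {X i * X j} := by
  have sup_eq_add : Finsupp.single i 1 ⊔ Finsupp.single j 1 =
      (Finsupp.single i 1 + Finsupp.single j 1 : σ →₀ ℕ) := by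
    classical
    ext l
    simp only [Finsupp.sup_apply, Finsupp.add_apply, Finsupp.single_apply]
    grind
  simp only [X, span_monomial_inf_span_monomial, monomial_mul, sup_eq_add, mul_one]

end MonomialIdeals

section DiagonalComplex

variable {R S : Type*} [CommRing R] [CommRing S]

/-- The differential `(a, b) ↦ ((x₁ - x₂) a, (y₁ - y₂) b)` attached to four elements of a
commutative ring; `nodal_d k` is its value at the coordinates of `nodalR k`. -/
def nodeDifferential (x₁ y₁ x₂ y₂ : R) :
    (R ⧸ Ideal.span {y₁, y₂}) × (R ⧸ Ideal.span {x₁, x₂}) →ₗ[R]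
      (R ⧸ Ideal.span {y₁, y₂}) × (R ⧸ Ideal.span {x₁, x₂}) :=
  (LinearMap.lsmul R _ (x₁ - x₂)).prodMap (LinearMap.lsmul R _ (y₁ - y₂))

/-- The augmentation `(a, b) ↦ ā + b̄` attached to four elements of a commutative ring;
`nodal_ε k` is its value at the coordinates of `nodalR k`. -/
def nodeAugmentation (x₁ y₁ x₂ y₂ : R) :
    (R ⧸ Ideal.span {y₁, y₂}) × (R ⧸ Ideal.span {x₁, x₂}) →ₗ[R]
      R ⧸ Ideal.span {x₁, y₁, x₂, y₂} :=
  (Submodule.factor (Ideal.span_mono (by grind))).coprod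
    (Submodule.factor (Ideal.span_mono (by grind)))

lemma range_antidiagonalMkQ_eq_ker_nodeAugmentation (x₁ y₁ x₂ y₂ : R) :
    LinearMap.range (antidiagonalMkQ (Ideal.span {y₁, y₂}) (Ideal.span {x₁, x₂})) =
      LinearMap.ker (nodeAugmentation x₁ y₁ x₂ y₂) := by
  refine range_antidiagonalMkQ _ _ ?_
  rw [← Ideal.span_union]
  exact Ideal.span_mono (by grind)

lemma comap_antidiagonalMkQ_range_nodeDifferential (x₁ y₁ x₂ y₂ : R) :
    (LinearMap.range (nodeDifferential x₁ y₁ x₂ y₂)).comap (antidiagonalMkQ _ _) =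
      (Ideal.span {y₁, y₂} ⊔ Ideal.span {x₁ - x₂}) ⊓
        (Ideal.span {x₁, x₂} ⊔ Ideal.span {y₁ - y₂}) := by
  rw [nodeDifferential, LinearMap.range_prodMap, comap_antidiagonalMkQ_prod,
    comap_mkQ_range_lsmul, comap_mkQ_range_lsmul]

theorem nodal_conic_middle_homology_general {x₁ y₁ x₂ y₂ : R} (φ : R →+* S)
    (hker : RingHom.ker φ = Ideal.span {x₁ - x₂, y₁ - y₂})
    (hinf : Ideal.span {φ x₁} ⊓ Ideal.span {φ y₁} = ⊥) :
    Nonempty ((LinearMap.ker (nodeAugmentation x₁ y₁ x₂ y₂) ⧸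
        (LinearMap.range (nodeDifferential x₁ y₁ x₂ y₂)).comap
          (LinearMap.ker (nodeAugmentation x₁ y₁ x₂ y₂)).subtype)
      ≃ₗ[R] R ⧸ Ideal.span {x₁ - x₂, y₁ - y₂}) :=
  ⟨(quotientComapSubtypeEquiv _ (range_antidiagonalMkQ_eq_ker_nodeAugmentation x₁ y₁ x₂ y₂) _).trans
    (Submodule.quotEquivOfEq _ _
      ((comap_antidiagonalMkQ_range_nodeDifferential x₁ y₁ x₂ y₂).trans
        (inf_sup_span_sub_eq_of_ker_eq φ hker hinf)))⟩

end DiagonalComplex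

/-- The coordinate ring `k[x, y]/(xy)` of the nodal conic. -/
abbrev NodalConic : Type :=
  MvPolynomial (Fin 2) k ⧸ (Ideal.span {X 0 * X 1} : Ideal (MvPolynomial (Fin 2) k))

namespace NodalConic

/-- The coordinate `x` on the nodal conic. -/
def x : NodalConic k := Ideal.Quotient.mk _ (X 0)

/-- The coordinate `y` on the nodal conic. -/
def y : NodalConic k := Ideal.Quotient.mk _ (X 1)

lemma x_mul_y : x k * y k = 0 :=
  Ideal.Quotient.eq_zero_iff_mem.2 (Ideal.mem_span_singleton_self _)

lemma span_x_inf_span_y : Ideal.span {x k} ⊓ Ideal.span {y k} = ⊥ :=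
  span_mk_inf_span_mk_eq_bot (span_X_inf_span_X zero_ne_one)

/-- The restriction of functions on the self-product to the diagonal, `x₁, x₂ ↦ x` and
`y₁, y₂ ↦ y`. -/
def diagonal : nodalR k →ₐ[k] NodalConic k :=
  Ideal.Quotient.liftₐ _ (aeval ![x k, y k, x k, y k]) fun p hp ↦ by
    refine (Ideal.span_le (I := RingHom.ker (aeval ![x k, y k, x k, y k]))).2 ?_ hp
    simp [Set.insert_subset_iff, RingHom.mem_ker, x_mul_y]

@[simp] lemma diagonal_nx₁ : diagonal k (nx₁ k) = x k := aeval_X _ _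

@[simp] lemma diagonal_ny₁ : diagonal k (ny₁ k) = y k := aeval_X _ _

@[simp] lemma diagonal_nx₂ : diagonal k (nx₂ k) = x k := aeval_X _ _

@[simp] lemma diagonal_ny₂ : diagonal k (ny₂ k) = y k := aeval_X _ _

/-- The pullback of functions along the first projection, `x ↦ x₁` and `y ↦ y₁`. -/
def pullbackFst : NodalConic k →ₐ[k] nodalR k :=
  Ideal.Quotient.liftₐ _ (aeval ![nx₁ k, ny₁ k]) fun p hp ↦ by
    refine (Ideal.span_le (I := RingHom.ker (aeval ![nx₁ k, ny₁ k]))).2 ?_ hp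
    have nx₁_mul_ny₁ : nx₁ k * ny₁ k = 0 :=
      Ideal.Quotient.eq_zero_iff_mem.2 (Ideal.subset_span (by simp))
    simp [RingHom.mem_ker, nx₁_mul_ny₁]

@[simp] lemma pullbackFst_x : pullbackFst k (x k) = nx₁ k := aeval_X _ _

@[simp] lemma pullbackFst_y : pullbackFst k (y k) = ny₁ k := aeval_X _ _

lemma mk_pullbackFst_diagonal (r : nodalR k) :
    Ideal.Quotient.mk (Ideal.span {nx₁ k - nx₂ k, ny₁ k - ny₂ k}) (pullbackFst k (diagonal k r)) =
      Ideal.Quotient.mk _ r := by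
  let π := Ideal.Quotient.mkₐ k (Ideal.span {nx₁ k - nx₂ k, ny₁ k - ny₂ k})
  have hx : π (nx₁ k) = π (nx₂ k) := Ideal.Quotient.eq.2 (Ideal.subset_span (by simp))
  have hy : π (ny₁ k) = π (ny₂ k) := Ideal.Quotient.eq.2 (Ideal.subset_span (by simp))
  suffices π.comp ((pullbackFst k).comp (diagonal k)) = π from DFunLike.congr_fun this r
  refine Ideal.Quotient.algHom_ext _ (MvPolynomial.algHom_ext fun i ↦ ?_)
  fin_cases i
  · change π (pullbackFst k (diagonal k (nx₁ k))) = π (nx₁ k)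
    rw [diagonal_nx₁, pullbackFst_x]
  · change π (pullbackFst k (diagonal k (ny₁ k))) = π (ny₁ k)
    rw [diagonal_ny₁, pullbackFst_y]
  · change π (pullbackFst k (diagonal k (nx₂ k))) = π (nx₂ k)
    rw [diagonal_nx₂, pullbackFst_x, hx]
  · change π (pullbackFst k (diagonal k (ny₂ k))) = π (ny₂ k)
    rw [diagonal_ny₂, pullbackFst_y, hy]

lemma ker_diagonal :
    RingHom.ker (diagonal k : nodalR k →+* NodalConic k) =
      Ideal.span {nx₁ k - nx₂ k, ny₁ k - ny₂ k} := by
  apply le_antisymm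
  · intro r hr
    have diagonal_r : diagonal k r = 0 := hr
    rw [← Ideal.Quotient.eq_zero_iff_mem, ← mk_pullbackFst_diagonal, diagonal_r, map_zero, map_zero]
  · rw [Ideal.span_le]
    simp [Set.insert_subset_iff, RingHom.mem_ker]

end NodalConic

/-- The middle homology of the three-term complex `A ⊕ B →(d) A ⊕ B →(ε) K`, namely
`(ker ε) ⧸ (range d)` (with `range d` regarded as a submodule of `ker ε`, which is
legitimate since `ε ∘ d = 0`), is isomorphic as an `R`-module to
`R ⧸ (x₁ − x₂, y₁ − y₂)`. -/
theorem nodal_conic_middle_homology :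
    Nonempty ((↥(LinearMap.ker (nodal_ε k)) ⧸
        (LinearMap.range (nodal_d k)).comap (LinearMap.ker (nodal_ε k)).subtype)
      ≃ₗ[nodalR k]
        (nodalR k ⧸ (Ideal.span {nx₁ k - nx₂ k, ny₁ k - ny₂ k} : Ideal (nodalR k)))) := by
  refine nodal_conic_middle_homology_general (NodalConic.diagonal k : nodalR k →+* NodalConic k)
    (NodalConic.ker_diagonal k) ?_
  simpa using NodalConic.span_x_inf_span_y k

end
end

section
/- With J_x = ker(A → K) the kernel of the canonical quotient map, there is an isomorphism of R-modules J_x ⧸ ((x₁ − x₂)·A) ≅ R ⧸ (x₁ − x₂, y₁, y₂). -/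
/-!
Let `k` be a field and `R = k[x₁,y₁,x₂,y₂]/(x₁y₁, x₂y₂)` the coordinate ring of the
self-product of the nodal conic, realized as `MvPolynomial (Fin 4) k` modulo the ideal
generated by `X 0 * X 1` and `X 2 * X 3`, with `x₁ = X 0`, `y₁ = X 1`, `x₂ = X 2`,
`y₂ = X 3`.  We define the `R`-modules `A = R/(y₁,y₂)`, `B = R/(x₁,x₂)`,
`K = R/(x₁,y₁,x₂,y₂)`, the map `d : A ⊕ B → A ⊕ B`, `(a,b) ↦ ((x₁−x₂)a, (y₁−y₂)b)`,
and the map `ε : A ⊕ B → K` given by the canonical quotient maps on each factor.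
-/

open MvPolynomial

set_option synthInstance.maxHeartbeats 1000000
set_option maxHeartbeats 1000000

noncomputable section

variable (k : Type) [Field k]

/-- The submodule `(x₁ − x₂)·A ⊆ A`. -/
def cxA : Submodule (nodalR k) (nodalA k) :=
  LinearMap.range (LinearMap.lsmul (nodalR k) (nodalA k) (nx₁ k - nx₂ k))

/-!
Write `I = (x₁ - x₂, y₁, y₂)`. Modulo `(x₁ - x₂)·A`, the module `J_x` is generated by the class of
`x₁`, and the annihilator of this class is the colon ideal `(I : x₁)`. Since `R / I` is the
polynomial ring in `x₁`, multiplication by `x₁` is injective on it, so `(I : x₁) = I`.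
-/

section CyclicQuotient

variable {R M : Type*} [CommRing R] [AddCommGroup M] [Module R M]

/-- If `P ≤ N + R ∙ m` with `m ∈ P`, then `P / (N ∩ P)` is cyclic on the class of `m`, whose
annihilator is the colon ideal `(N : m)`. -/
def quotColonEquivOfLeSupSpan {P N : Submodule R M} {m : M} (hm : m ∈ P) (hP : P ≤ N ⊔ R ∙ m) :
    (R ⧸ N.colon {m}) ≃ₗ[R] P ⧸ N.comap P.subtype :=
  let φ : R →ₗ[R] P ⧸ N.comap P.subtype := (Submodule.mkQ _).comp (.toSpanSingleton R P ⟨m, hm⟩)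
  have ker_φ : N.colon {m} = LinearMap.ker φ := by
    ext r
    simp [φ, Submodule.mem_colon_singleton, LinearMap.ker_comp]
  have surjective_φ : Function.Surjective φ := by
    intro z
    obtain ⟨⟨p, hp⟩, rfl⟩ := Submodule.mkQ_surjective _ z
    obtain ⟨n, hn, _, hrm, rfl⟩ := Submodule.mem_sup.mp (hP hp)
    obtain ⟨r, rfl⟩ := Submodule.mem_span_singleton.mp hrm
    refine ⟨r, (Submodule.Quotient.eq _).mpr ?_⟩
    simpa using hn
  (Submodule.quotEquivOfEq _ _ ker_φ).trans (φ.quotKerEquivOfSurjective surjective_φ)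

theorem range_lsmul_quotient (J : Ideal R) (c : R) :
    LinearMap.range (LinearMap.lsmul R (R ⧸ J) c) = R ∙ J.mkQ c := by
  ext a
  simp only [LinearMap.mem_range, Submodule.mem_span_singleton, J.mkQ_surjective.exists,
    LinearMap.lsmul_apply, ← map_smul, smul_eq_mul, mul_comm c]

/-- If `x ∈ K ⊆ J + (c, x)`, the kernel of `R ⧸ J → R ⧸ K` modulo its intersection with
`c • (R ⧸ J)` is cyclic on the class of `x`, whose annihilator is the colon ideal
`((J + (c)) : x)`. -/
def kerFactorQuotEquivColon {J K : Ideal R} {c x : R} (hJK : J ≤ K) (hx : x ∈ K)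
    (hK : K ≤ J ⊔ Ideal.span {c, x}) :
    (LinearMap.ker (Submodule.factor hJK) ⧸
        (LinearMap.range (LinearMap.lsmul R (R ⧸ J) c)).comap
          (LinearMap.ker (Submodule.factor hJK)).subtype) ≃ₗ[R]
      R ⧸ (J ⊔ Ideal.span {c}).colon {x} :=
  have ker_eq : LinearMap.ker (Submodule.factor hJK) = Submodule.map J.mkQ K := by
    rw [Submodule.factor, Submodule.ker_mapQ, Submodule.comap_id]
  have x_mem : J.mkQ x ∈ LinearMap.ker (Submodule.factor hJK) :=
    ker_eq ▸ Submodule.mem_map_of_mem hx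
  have ker_le : LinearMap.ker (Submodule.factor hJK) ≤
      LinearMap.range (LinearMap.lsmul R (R ⧸ J) c) ⊔ R ∙ J.mkQ x :=
    calc LinearMap.ker (Submodule.factor hJK)
      _ ≤ Submodule.map J.mkQ (J ⊔ Ideal.span {c, x}) := ker_eq.trans_le (Submodule.map_mono hK)
      _ = (R ∙ J.mkQ c) ⊔ R ∙ J.mkQ x := by
        rw [Submodule.map_sup, Submodule.mkQ_map_self, bot_sup_eq, Ideal.span, Submodule.map_span,
          Set.image_pair, Submodule.span_insert]
      _ = LinearMap.range (LinearMap.lsmul R (R ⧸ J) c) ⊔ R ∙ J.mkQ x := by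
        rw [range_lsmul_quotient]
  have colon_eq : (J ⊔ Ideal.span {c}).colon {x} =
      (LinearMap.range (LinearMap.lsmul R (R ⧸ J) c)).colon {J.mkQ x} := by
    ext r
    rw [Submodule.mem_colon_singleton, Submodule.mem_colon_singleton, range_lsmul_quotient,
      ← map_smul, ← Set.image_singleton, ← Submodule.map_span, ← Submodule.mem_comap,
      Submodule.comap_map_mkQ, Ideal.span]
  ((Submodule.quotEquivOfEq _ _ colon_eq).trans (quotColonEquivOfLeSupSpan x_mem ker_le)).symm

end CyclicQuotient

theorem colon_map_of_surjective {A B : Type*} [CommRing A] [CommRing B] {π : A →+* B}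
    (hπ : Function.Surjective π) {I : Ideal A} (hI : RingHom.ker π ≤ I) (x : A) :
    (I.map π).colon {π x} = (I.colon {x}).map π := by
  have mem_map_iff (L : Ideal A) (hL : RingHom.ker π ≤ L) (a : A) : π a ∈ L.map π ↔ a ∈ L := by
    rw [← Ideal.mem_comap, Ideal.comap_map_of_surjective' π hπ, sup_eq_left.mpr hL]
  ext b
  obtain ⟨a, rfl⟩ := hπ b
  rw [Submodule.mem_colon_singleton, smul_eq_mul, ← map_mul, mem_map_iff I hI,
    mem_map_iff _ (hI.trans Ideal.le_colon), Submodule.mem_colon_singleton, smul_eq_mul]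

theorem ker_aeval_le_of_X_sub_mem {σ S B : Type*} [CommRing S] [CommRing B] [Algebra S B]
    {f : σ → B} {I : Ideal (MvPolynomial σ S)} (s : B →ₐ[S] MvPolynomial σ S)
    (h : ∀ i, X i - s (f i) ∈ I) :
    RingHom.ker (aeval (R := S) f) ≤ I := by
  have mk_section : (Ideal.Quotient.mkₐ S I).comp (s.comp (aeval f)) = Ideal.Quotient.mkₐ S I := by
    ext i
    simpa using (Ideal.Quotient.eq.mpr (h i)).symm
  intro p hp
  have mk_p := DFunLike.congr_fun mk_section p
  rw [RingHom.mem_ker] at hp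
  simpa [hp, eq_comm (a := (0 : _ ⧸ I)), Ideal.Quotient.eq_zero_iff_mem] using mk_p

/-- The ideal `(x₁ - x₂, y₁, y₂)` of the diagonal of `{y₁ = y₂ = 0}` in affine `4`-space, with the
coordinates `x₁, y₁, x₂, y₂` numbered `0, 1, 2, 3`. -/
def diagonalLineIdeal (S : Type*) [CommRing S] : Ideal (MvPolynomial (Fin 4) S) :=
  Ideal.span {X 0 - X 2, X 1, X 3}

theorem ker_aeval_eq_diagonalLineIdeal (S : Type*) [CommRing S] :
    RingHom.ker (aeval (R := S) ![(Polynomial.X : Polynomial S), 0, Polynomial.X, 0]) =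
      diagonalLineIdeal S := by
  apply le_antisymm
  · apply ker_aeval_le_of_X_sub_mem (Polynomial.aeval (X 0))
    intro i
    fin_cases i
    · simp
    · exact Ideal.subset_span (by simp)
    · rw [← neg_mem_iff]
      exact Ideal.subset_span (by simp)
    · exact Ideal.subset_span (by simp)
  · simp [diagonalLineIdeal, Ideal.span_le, Set.insert_subset_iff, RingHom.mem_ker]

theorem diagonalLineIdeal_colon_X_zero (S : Type*) [CommRing S] :
    (diagonalLineIdeal S).colon {X 0} = diagonalLineIdeal S := by
  rw [← ker_aeval_eq_diagonalLineIdeal]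
  ext f
  simp [RingHom.mem_ker]

theorem span_nodal_relations_le_diagonalLineIdeal (S : Type*) [CommRing S] :
    Ideal.span {X 0 * X 1, X 2 * X 3} ≤ diagonalLineIdeal S := by
  rw [← ker_aeval_eq_diagonalLineIdeal, Ideal.span_le]
  simp [Set.insert_subset_iff, RingHom.mem_ker]

theorem span_pair_le_span_quadruple {R : Type*} [CommRing R] (x₁ y₁ x₂ y₂ : R) :
    Ideal.span {y₁, y₂} ≤ Ideal.span {x₁, y₁, x₂, y₂} :=
  Ideal.span_mono (by grind)

theorem span_quadruple_eq_sup {R : Type*} [CommRing R] (x₁ y₁ x₂ y₂ : R) :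
    Ideal.span {x₁, y₁, x₂, y₂} = Ideal.span {y₁, y₂} ⊔ Ideal.span {x₁ - x₂, x₁} := by
  rw [Ideal.span_pair_sub_left', ← Ideal.span_union]
  congr 1
  grind

/-- Here `π` presents `R` as the coordinate ring of a closed subscheme of affine `4`-space over `S`
which contains the diagonal line `{x₁ = x₂, y₁ = y₂ = 0}`. -/
theorem nodal_conic_Jx_quotient_general {S R : Type*} [CommRing S] [CommRing R]
    {π : MvPolynomial (Fin 4) S →+* R} (hπ : Function.Surjective π)
    (hker : RingHom.ker π ≤ diagonalLineIdeal S) :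
    let q := Submodule.factor
      (span_pair_le_span_quadruple (π (X 0)) (π (X 1)) (π (X 2)) (π (X 3)))
    Nonempty ((LinearMap.ker q ⧸
        (LinearMap.range (LinearMap.lsmul R _ (π (X 0) - π (X 2)))).comap (LinearMap.ker q).subtype)
      ≃ₗ[R] R ⧸ Ideal.span {π (X 0) - π (X 2), π (X 1), π (X 3)}) := by
  intro q
  have map_diagonalLineIdeal : (diagonalLineIdeal S).map π =
      Ideal.span {π (X 0) - π (X 2), π (X 1), π (X 3)} := by
    simp [diagonalLineIdeal, Ideal.map_span, Set.image_insert_eq]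
  have colon_eq : (Ideal.span {π (X 1), π (X 3)} ⊔ Ideal.span {π (X 0) - π (X 2)}).colon {π (X 0)} =
      Ideal.span {π (X 0) - π (X 2), π (X 1), π (X 3)} := by
    rw [sup_comm, ← Ideal.span_insert, ← map_diagonalLineIdeal, colon_map_of_surjective hπ hker,
      diagonalLineIdeal_colon_X_zero]
  have x₁_mem : π (X 0) ∈ Ideal.span {π (X 0), π (X 1), π (X 2), π (X 3)} :=
    Ideal.subset_span (Set.mem_insert _ _)
  exact ⟨(kerFactorQuotEquivColon _ x₁_mem (span_quadruple_eq_sup _ _ _ _).le).trans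
    (Submodule.quotEquivOfEq _ _ colon_eq)⟩

/-- With `J_x = ker(A → K)` the kernel of the canonical quotient map, there is an
isomorphism of `R`-modules `J_x ⧸ ((x₁ − x₂)·A) ≅ R ⧸ (x₁ − x₂, y₁, y₂)`. -/
theorem nodal_conic_Jx_quotient :
    Nonempty ((↥(LinearMap.ker (qA k)) ⧸ (cxA k).comap (LinearMap.ker (qA k)).subtype)
      ≃ₗ[nodalR k]
        (nodalR k ⧸ (Ideal.span {nx₁ k - nx₂ k, ny₁ k, ny₂ k} : Ideal (nodalR k)))) := by
  refine nodal_conic_Jx_quotient_general (π := Ideal.Quotient.mk _) Ideal.Quotient.mk_surjective ?_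
  exact Ideal.mk_ker.trans_le (span_nodal_relations_le_diagonalLineIdeal k)

end
end
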